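/- Let X ⊆ ℝ^d be a nonempty closed convex set, T ≥ 1, and let η_1 ≥ η_2 ≥ ⋯ ≥ η_T > 0 be non-increasing step sizes. For t = 1, …, T let ℓ^t : ℝ^d → ℝ be convex and differentiable. Define the optimistic gradient iterates: w^0 ∈ X, g^0 = 0, and for t = 1, …, T: x^t = Π_X[w^{t−1} − η_t g^{t−1}], g^t = ∇ℓ^t(x^t), w^t = Π_X[w^{t−1} − η_t g^t]. Let f : ℝ^d → ℝ be convex on X and suppose for each t = 1, …, T there is a proximal point p^t ∈ X of f at x^t over X. Set D = max_{0 ≤ t ≤ T−1} ‖w^t − p^{t+1}‖ and B_f = max_{1 ≤ t ≤ T} f(p^t) − min_{1 ≤ t ≤ T} f(p^t). Then ∑_{t=1}^T ⟨∇ℓ^t(x^t), x^t − p^t⟩ ≤ (D² + 2B_f − ‖w^T − p^T‖²)/(2η_T) + ∑_{t=1}^T η_t‖g^t − g^{t−1}‖² − ∑_{t=1}^T (1/(2η_t))‖x^t − w^t‖². -/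

import Mathlib

open scoped InnerProductSpace

theorem aux_prox {E : Type*} [NormedAddCommGroup E] [InnerProductSpace ℝ E] {X : Set E}
    {f : E → ℝ} (hf : ConvexOn ℝ X f) {u z y : E} (hu : u ∈ X) (hy : y ∈ X)
    (hmin : ∀ v ∈ X, f u + (1 / 2) * ‖u - z‖ ^ 2 ≤ f v + (1 / 2) * ‖v - z‖ ^ 2) :
    f u + (1 / 2) * ‖u - z‖ ^ 2 + (1 / 2) * ‖y - u‖ ^ 2 ≤ f y + (1 / 2) * ‖y - z‖ ^ 2 := by
  have key : ∀ s : ℝ, 0 < s → s ≤ 1 →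
      f u + (1 / 2) * ‖u - z‖ ^ 2 + (1 / 2) * ‖y - u‖ ^ 2 - (f y + (1 / 2) * ‖y - z‖ ^ 2)
        ≤ s * ((1 / 2) * ‖y - u‖ ^ 2) := by
    intro s hs hs1
    have h1 := hf.2 hu hy (by linarith : 0 ≤ 1 - s) hs.le (by ring)
    have h2 := hmin _ (hf.1 hu hy (by linarith : 0 ≤ 1 - s) hs.le (by ring))
    have e : ‖(1 - s) • u + s • y - z‖ ^ 2 =
        (1 - s) * ‖u - z‖ ^ 2 + s * ‖y - z‖ ^ 2 - s * (1 - s) * ‖y - u‖ ^ 2 := by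
      have e1 : (1 - s) • u + s • y - z = (u - z) + s • (y - u) := by module
      have e2 : y - z = (u - z) + (y - u) := by abel
      rw [e1, e2, norm_add_sq_real, norm_add_sq_real, inner_smul_right, norm_smul, mul_pow,
        Real.norm_eq_abs, sq_abs]
      ring
    rw [e] at h2
    simp only [smul_eq_mul] at h1
    have h3 : s * (f u + (1 / 2) * ‖u - z‖ ^ 2 + (1 / 2) * ‖y - u‖ ^ 2
        - (f y + (1 / 2) * ‖y - z‖ ^ 2)) ≤ s * (s * ((1 / 2) * ‖y - u‖ ^ 2)) := by
      linarith
    exact le_of_mul_le_mul_left h3 hs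
  by_contra! h
  set K := (1 / 2) * ‖y - u‖ ^ 2 with hK
  have hK0 : 0 ≤ K := by positivity
  set c := f u + (1 / 2) * ‖u - z‖ ^ 2 + K - (f y + (1 / 2) * ‖y - z‖ ^ 2) with hc
  have hc0 : 0 < c := by linarith
  have hcK : c ≤ K := by simpa using key 1 one_pos le_rfl
  have hKp : 0 < K := by linarith
  have := key (c / (2 * K)) (by positivity) (by rw [div_le_one (by positivity)]; linarith)
  have e : c / (2 * K) * K = c / 2 := by field_simp
  linarith

theorem aux_proj {E : Type*} [NormedAddCommGroup E] [InnerProductSpace ℝ E] {X : Set E}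
    (hX : Convex ℝ X) {x w0 g y : E} {η : ℝ} (hx : x ∈ X) (hy : y ∈ X)
    (hmin : ∀ v ∈ X, ‖x - (w0 - η • g)‖ ≤ ‖v - (w0 - η • g)‖) :
    η * ⟪g, x - y⟫_ℝ ≤ (1 / 2) * (‖w0 - y‖ ^ 2 - ‖x - y‖ ^ 2 - ‖x - w0‖ ^ 2) := by
  have h := aux_prox (f := fun _ => (0 : ℝ)) (convexOn_const 0 hX) hx hy (z := w0 - η • g)
    (by intro v hv; have := hmin v hv; simp only [zero_add]; gcongr)
  have e1 : x - (w0 - η • g) = (x - w0) + η • g := by abel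
  have e2 : y - (w0 - η • g) = (y - w0) + η • g := by abel
  have e3 : x - y = (x - w0) - (y - w0) := by abel
  rw [e1, e2, norm_add_sq_real, norm_add_sq_real, inner_smul_right, inner_smul_right,
    norm_sub_rev y x] at h
  rw [norm_sub_rev w0 y]
  have e4 : ⟪g, x - y⟫_ℝ = ⟪x - w0, g⟫_ℝ - ⟪y - w0, g⟫_ℝ := by
    rw [← inner_sub_left, ← e3, real_inner_comm]
  rw [e4]
  linarith

theorem aux_step {E : Type*} [NormedAddCommGroup E] [InnerProductSpace ℝ E] {X : Set E}
    (hX : Convex ℝ X) {x w w0 g g' p : E} {η : ℝ} (hη : 0 < η)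
    (hx : x ∈ X) (hw : w ∈ X) (hp : p ∈ X)
    (hxm : ∀ v ∈ X, ‖x - (w0 - η • g')‖ ≤ ‖v - (w0 - η • g')‖)
    (hwm : ∀ v ∈ X, ‖w - (w0 - η • g)‖ ≤ ‖v - (w0 - η • g)‖) :
    ⟪g, x - p⟫_ℝ ≤ 1 / (2 * η) * (‖w0 - p‖ ^ 2 - ‖w - p‖ ^ 2 - ‖x - w0‖ ^ 2)
      + η * ‖g - g'‖ ^ 2 - 1 / (2 * η) * ‖x - w‖ ^ 2 := by
  have h1 := aux_proj hX hw hp hwm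
  have h2 := aux_proj hX hx hw hxm
  have h3 := aux_proj hX hw hx hwm
  have h4 : 0 ≤ ‖η • (g - g') - (x - w)‖ ^ 2 := by positivity
  rw [norm_sub_sq_real, inner_smul_left, norm_smul, mul_pow, Real.norm_eq_abs, sq_abs,
    inner_sub_left] at h4
  simp only [conj_trivial] at h4
  have e1 : ⟪g, x - p⟫_ℝ = ⟪g, x - w⟫_ℝ + ⟪g, w - p⟫_ℝ := by
    rw [← inner_add_right]; congr 1; abel
  have e2 : ⟪g, w - x⟫_ℝ = - ⟪g, x - w⟫_ℝ := by
    rw [← inner_neg_right]; congr 1; abel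
  rw [e2, norm_sub_rev w x, norm_sub_rev w0 x] at h3
  rw [norm_sub_rev w0 w] at h2
  have h5 : η * ⟪g, x - p⟫_ℝ ≤ η * (1 / (2 * η) * (‖w0 - p‖ ^ 2 - ‖w - p‖ ^ 2 - ‖x - w0‖ ^ 2)
      + η * ‖g - g'‖ ^ 2 - 1 / (2 * η) * ‖x - w‖ ^ 2) := by
    have e : η * (1 / (2 * η) * (‖w0 - p‖ ^ 2 - ‖w - p‖ ^ 2 - ‖x - w0‖ ^ 2)
      + η * ‖g - g'‖ ^ 2 - 1 / (2 * η) * ‖x - w‖ ^ 2) =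
      1 / 2 * (‖w0 - p‖ ^ 2 - ‖w - p‖ ^ 2 - ‖x - w0‖ ^ 2)
      + η ^ 2 * ‖g - g'‖ ^ 2 - 1 / 2 * ‖x - w‖ ^ 2 := by field_simp
    rw [e, e1]
    linarith
  exact le_of_mul_le_mul_left h5 hη

theorem aux_drift {E : Type*} [NormedAddCommGroup E] [InnerProductSpace ℝ E]
    {w x p p' : E} {a b : ℝ}
    (h : b + (1 / 2) * ‖p' - x‖ ^ 2 + (1 / 2) * ‖p - p'‖ ^ 2 ≤ a + (1 / 2) * ‖p - x‖ ^ 2) :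
    ‖w - p'‖ ^ 2 - ‖w - p‖ ^ 2 ≤ 2 * (a - b) + ‖x - w‖ ^ 2 := by
  have h1 : 0 ≤ ‖(w - x) - (p - p')‖ ^ 2 := by positivity
  have e1 : w - p' = (w - x) - (p' - x) := by abel
  have e2 : w - p = (w - x) - (p - x) := by abel
  have e3 : p - p' = (p - x) - (p' - x) := by abel
  rw [norm_sub_sq_real] at h1
  have e4 : ⟪w - x, p - p'⟫_ℝ = ⟪w - x, p - x⟫_ℝ - ⟪w - x, p' - x⟫_ℝ := by
    rw [← inner_sub_right, ← e3]
  rw [e4] at h1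
  rw [e1, e2, norm_sub_sq_real (w - x) (p' - x), norm_sub_sq_real (w - x) (p - x),
    norm_sub_rev x w]
  linarith

/-- Optimistic gradient descent with non-increasing step sizes over a nonempty
closed convex set `X ⊆ ℝ^d`, against convex differentiable losses `ℓ^t` (with gradient maps
`g t`): `x t = Π_X (w (t−1) − η t • gv (t−1))`, `gv t = g t (x t)`, `w t = Π_X (w (t−1) − η t • gv t)`,
with `gv 0 = 0` and `w 0 ∈ X`. For any `f` convex on `X`, with proximal points `p t` of `f` at
`x t` over `X`, `D = max_{0≤t≤T−1} ‖w t − p (t+1)‖` and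
`B_f = max_{1≤t≤T} f (p t) − min_{1≤t≤T} f (p t)`, the stated proximal regret bound holds. -/
theorem stmt_6 {d : ℕ} {X : Set (EuclideanSpace ℝ (Fin d))}
    (hXne : X.Nonempty) (hXclosed : IsClosed X) (hXconv : Convex ℝ X)
    {T : ℕ} (hT : 1 ≤ T)
    {η : ℕ → ℝ} (hηpos : ∀ t ∈ Finset.Icc 1 T, 0 < η t)
    (hηmono : ∀ t ∈ Finset.Icc 1 (T - 1), η (t + 1) ≤ η t)
    {ℓ : ℕ → EuclideanSpace ℝ (Fin d) → ℝ}
    {g : ℕ → EuclideanSpace ℝ (Fin d) → EuclideanSpace ℝ (Fin d)}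
    (hconv : ∀ t ∈ Finset.Icc 1 T, ConvexOn ℝ Set.univ (ℓ t))
    (hgrad : ∀ t ∈ Finset.Icc 1 T, ∀ a, HasGradientAt (ℓ t) (g t a) a)
    (proj : EuclideanSpace ℝ (Fin d) → EuclideanSpace ℝ (Fin d))
    (hproj : ∀ z, proj z ∈ X ∧ ∀ y ∈ X, ‖proj z - z‖ ≤ ‖y - z‖)
    {w x gv : ℕ → EuclideanSpace ℝ (Fin d)}
    (hw0 : w 0 ∈ X) (hgv0 : gv 0 = 0)
    (hxstep : ∀ t ∈ Finset.Icc 1 T, x t = proj (w (t - 1) - η t • gv (t - 1)))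
    (hgvdef : ∀ t ∈ Finset.Icc 1 T, gv t = g t (x t))
    (hwstep : ∀ t ∈ Finset.Icc 1 T, w t = proj (w (t - 1) - η t • gv t))
    {f : EuclideanSpace ℝ (Fin d) → ℝ} (hf : ConvexOn ℝ X f)
    {p : ℕ → EuclideanSpace ℝ (Fin d)} (hpX : ∀ t ∈ Finset.Icc 1 T, p t ∈ X)
    (hpmin : ∀ t ∈ Finset.Icc 1 T,
      IsMinOn (fun y => f y + (1 / 2) * ‖y - x t‖ ^ 2) X (p t))
    {D Bf : ℝ}
    (hD : D = (Finset.range T).sup' (Finset.nonempty_range_iff.mpr (by omega))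
      fun t => ‖w t - p (t + 1)‖)
    (hBf : Bf = ((Finset.Icc 1 T).sup' (Finset.nonempty_Icc.mpr hT) fun t => f (p t))
      - (Finset.Icc 1 T).inf' (Finset.nonempty_Icc.mpr hT) fun t => f (p t)) :
    ∑ t ∈ Finset.Icc 1 T, ⟪g t (x t), x t - p t⟫_ℝ
      ≤ (D ^ 2 + 2 * Bf - ‖w T - p T‖ ^ 2) / (2 * η T)
        + ∑ t ∈ Finset.Icc 1 T, η t * ‖gv t - gv (t - 1)‖ ^ 2
        - ∑ t ∈ Finset.Icc 1 T, 1 / (2 * η t) * ‖x t - w t‖ ^ 2 := by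
  have hxX : ∀ t ∈ Finset.Icc 1 T, x t ∈ X := fun t ht => by
    rw [hxstep t ht]; exact (hproj _).1
  have hwX : ∀ t ∈ Finset.Icc 1 T, w t ∈ X := fun t ht => by
    rw [hwstep t ht]; exact (hproj _).1
  set M := (Finset.Icc 1 T).sup' (Finset.nonempty_Icc.mpr hT) fun t => f (p t) with hM
  set m := (Finset.Icc 1 T).inf' (Finset.nonempty_Icc.mpr hT) fun t => f (p t) with hm
  have hMle : ∀ t ∈ Finset.Icc 1 T, f (p t) ≤ M := fun t ht =>
    Finset.le_sup' (fun t => f (p t)) ht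
  have hmle : ∀ t ∈ Finset.Icc 1 T, m ≤ f (p t) := fun t ht =>
    Finset.inf'_le (fun t => f (p t)) ht
  have hDle : ∀ t < T, ‖w t - p (t + 1)‖ ^ 2 ≤ D ^ 2 := fun t ht => by
    have : ‖w t - p (t + 1)‖ ≤ D := by
      rw [hD]
      exact Finset.le_sup' (fun t => ‖w t - p (t + 1)‖) (Finset.mem_range.mpr ht)
    gcongr
  have hstep : ∀ t ∈ Finset.Icc 1 T, ⟪g t (x t), x t - p t⟫_ℝ ≤
      1 / (2 * η t) * (‖w (t - 1) - p t‖ ^ 2 - ‖w t - p t‖ ^ 2 - ‖x t - w (t - 1)‖ ^ 2)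
      + η t * ‖gv t - gv (t - 1)‖ ^ 2 - 1 / (2 * η t) * ‖x t - w t‖ ^ 2 := fun t ht => by
    rw [← hgvdef t ht]
    refine aux_step hXconv (hηpos t ht) (hxX t ht) (hwX t ht) (hpX t ht) ?_ ?_
    · rw [hxstep t ht]; exact (hproj _).2
    · rw [hwstep t ht]; exact (hproj _).2
  have main : ∀ n, 1 ≤ n → n ≤ T →
      ∑ t ∈ Finset.Icc 1 n, ⟪g t (x t), x t - p t⟫_ℝ
      ≤ 1 / (2 * η n) * (D ^ 2 + 2 * (M - f (p n)) - ‖w n - p n‖ ^ 2)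
        + ∑ t ∈ Finset.Icc 1 n, η t * ‖gv t - gv (t - 1)‖ ^ 2
        - ∑ t ∈ Finset.Icc 1 n, 1 / (2 * η t) * ‖x t - w t‖ ^ 2 := by
    intro n hn
    induction n, hn using Nat.le_induction with
    | base =>
      intro _
      have h1 : 1 ∈ Finset.Icc 1 T := by simp [hT]
      have hs := hstep 1 h1
      have hd := hDle 0 (by omega)
      have hp := hηpos 1 h1
      have hb := hMle 1 h1
      simp only [Finset.Icc_self, Finset.sum_singleton]
      simp only [Nat.sub_self, zero_add] at hs hd ⊢
      have : 1 / (2 * η 1) * (‖w 0 - p 1‖ ^ 2 - ‖w 1 - p 1‖ ^ 2 - ‖x 1 - w 0‖ ^ 2) ≤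
          1 / (2 * η 1) * (D ^ 2 + 2 * (M - f (p 1)) - ‖w 1 - p 1‖ ^ 2) := by
        apply mul_le_mul_of_nonneg_left _ (by positivity)
        have : 0 ≤ ‖x 1 - w 0‖ ^ 2 := by positivity
        linarith
      linarith
    | succ n hn ih =>
      intro hnT
      have ih := ih (by omega)
      have hn0 : n ∈ Finset.Icc 1 T := Finset.mem_Icc.mpr ⟨hn, by omega⟩
      have hn1 : n + 1 ∈ Finset.Icc 1 T := Finset.mem_Icc.mpr ⟨by omega, hnT⟩
      have hs := hstep (n + 1) hn1
      rw [Finset.sum_Icc_succ_top (by omega), Finset.sum_Icc_succ_top (by omega),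
        Finset.sum_Icc_succ_top (by omega)]
      simp only [Nat.add_sub_cancel] at hs ⊢
      have hd := hDle n (by omega)
      have hb := hMle (n + 1) hn1
      have hp0 := hηpos n hn0
      have hp1 := hηpos (n + 1) hn1
      have hmo := hηmono n (Finset.mem_Icc.mpr ⟨hn, by omega⟩)
      have hc : 1 / (2 * η n) ≤ 1 / (2 * η (n + 1)) := by gcongr
      have hc0 : 0 ≤ 1 / (2 * η n) := by positivity
      have hdr := aux_drift (w := w n) (aux_prox hf (hpX _ hn1) (hpX _ hn0)
        (fun v hv => hpmin _ hn1 hv))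
      have hq : 0 ≤ ‖x (n + 1) - w n‖ ^ 2 := by positivity
      generalize 1 / (2 * η n) = c at *
      generalize 1 / (2 * η (n + 1)) = c' at *
      have k1 := mul_le_mul_of_nonneg_left hdr hc0
      have k2 : 0 ≤ (c' - c) * (D ^ 2 - ‖w n - p (n + 1)‖ ^ 2 + 2 * (M - f (p (n + 1)))
          + ‖x (n + 1) - w n‖ ^ 2) :=
        mul_nonneg (by linarith) (by linarith)
      linarith
  have hTm : T ∈ Finset.Icc 1 T := Finset.mem_Icc.mpr ⟨hT, le_rfl⟩
  have hfin := main T hT le_rfl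
  have hp := hηpos T hTm
  have hmT := hmle T hTm
  have : 1 / (2 * η T) * (D ^ 2 + 2 * (M - f (p T)) - ‖w T - p T‖ ^ 2) ≤
      (D ^ 2 + 2 * Bf - ‖w T - p T‖ ^ 2) / (2 * η T) := by
    rw [one_div_mul_eq_div]
    gcongr
    linarith
  linarith
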